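/- arXiv:2302.10118 — 3 statements merged into one kernel-verified Lean document; each statement's English description precedes it below -/
import Mathlib

section
/- Let d ∈ ℝ^{Φ⁺} satisfy every defining inequality of K_{2n} strictly. Then for all integers 1 ≤ a < b < c < e ≤ 2n the strict rectangle-exchange inequality holds: d(r(a,e)) + d(r(b,c)) < d(r(a,c)) + d(r(b,e)). (This is the statement that, for disjoint increasing index sets, the linear functional σ ↦ Σ_r d(r(i_r, j_{σ(r)})) on permutations strictly decreases along covering relations of the Bruhat order.) -/
/-- Index of a positive root of `sp_{2n}`: `(i, j, false)` encodes `α_{i,j}` with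
`1 ≤ i ≤ j ≤ n`, and `(i, j, true)` encodes `α_{i,j̄}` with `1 ≤ i ≤ j ≤ n-1`. -/
def IsSpRootIdx (n : ℕ) (t : ℕ × ℕ × Bool) : Prop :=
  1 ≤ t.1 ∧ t.1 ≤ t.2.1 ∧ t.2.1 ≤ n ∧ (t.2.2 = true → t.2.1 + 1 ≤ n)

instance (n : ℕ) (t : ℕ × ℕ × Bool) : Decidable (IsSpRootIdx n t) :=
  inferInstanceAs (Decidable (1 ≤ t.1 ∧ t.1 ≤ t.2.1 ∧ t.2.1 ≤ n ∧ (t.2.2 = true → t.2.1 + 1 ≤ n)))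

/-- The set `Φ⁺` of positive roots of `sp_{2n}`. -/
def SpRoot (n : ℕ) : Type := {t : ℕ × ℕ × Bool // IsSpRootIdx n t}

/-- Normalised root index, implementing the convention `α_{i,n̄} := α_{i,n}`. -/
def rIdx (n i j : ℕ) (b : Bool) : ℕ × ℕ × Bool :=
  if b = true ∧ j = n then (i, j, false) else (i, j, b)
/-- Evaluate `d ∈ ℝ^{Φ⁺}` on a root index (value `0` outside `Φ⁺`). -/
noncomputable def dval {n : ℕ} (d : SpRoot n → ℝ) (t : ℕ × ℕ × Bool) : ℝ :=
  if h : IsSpRootIdx n t then d ⟨t, h⟩ else 0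

/-- `d_{i,j}`. -/
noncomputable def dA {n : ℕ} (d : SpRoot n → ℝ) (i j : ℕ) : ℝ := dval d (i, j, false)

/-- `d_{i,j̄}`, with the convention `d_{i,n̄} = d_{i,n}`. -/
noncomputable def dB {n : ℕ} (d : SpRoot n → ℝ) (i j : ℕ) : ℝ := dval d (rIdx n i j true)
inductive FacetKind
  | A | B | C | D
  deriving DecidableEq

/-- Labels of the `n(n-1)` defining inequalities (facets) of `K_{2n}`. -/
def Facets (n : ℕ) : Set (FacetKind × ℕ × ℕ) :=
  {f | (f.1 = FacetKind.A ∧ 1 ≤ f.2.1 ∧ f.2.1 + 1 ≤ n ∧ f.2.2 = f.2.1 + 1) ∨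
       (f.1 = FacetKind.B ∧ 1 ≤ f.2.1 ∧ f.2.1 < f.2.2 ∧ f.2.2 + 1 ≤ n) ∨
       (f.1 = FacetKind.C ∧ 1 ≤ f.2.1 ∧ f.2.1 < f.2.2 ∧ f.2.2 + 1 ≤ n) ∨
       (f.1 = FacetKind.D ∧ 1 ≤ f.2.1 ∧ f.2.1 + 1 ≤ n ∧ f.2.2 = f.2.1 + 1)}

/-- Left-hand side of the defining inequality with a given label. -/
noncomputable def facetLhs {n : ℕ} (d : SpRoot n → ℝ) : FacetKind × ℕ × ℕ → ℝ
  | (FacetKind.A, i, _) => dA d i i + dA d (i+1) (i+1)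
  | (FacetKind.B, i, j) => dA d i j + dA d (i+1) (j+1)
  | (FacetKind.C, i, j) => dB d i (j+1) + dB d (i+1) j
  | (FacetKind.D, i, _) => 2 * dB d i (i+1)

/-- Right-hand side of the defining inequality with a given label. -/
noncomputable def facetRhs {n : ℕ} (d : SpRoot n → ℝ) : FacetKind × ℕ × ℕ → ℝ
  | (FacetKind.A, i, _) => dA d i (i+1)
  | (FacetKind.B, i, j) => dA d i (j+1) + dA d (i+1) j
  | (FacetKind.C, i, j) => dB d i j + dB d (i+1) (j+1)
  | (FacetKind.D, i, _) => dB d i i + dB d (i+1) (i+1)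

/-- The symplectic FFLV degree cone `K_{2n} ⊆ ℝ^{Φ⁺}`. -/
def Kcone (n : ℕ) : Set (SpRoot n → ℝ) :=
  {d | ∀ f ∈ Facets n, facetRhs d f ≤ facetLhs d f}

/-- Points of `ℝ^{Φ⁺}` satisfying every defining inequality of `K_{2n}` strictly. -/
def KconeStrict (n : ℕ) : Set (SpRoot n → ℝ) :=
  {d | ∀ f ∈ Facets n, facetRhs d f < facetLhs d f}

/-- The positive root `r(x,y)` attached to `1 ≤ x < y ≤ 2n` (identifying
`1 < ⋯ < n < n̄ < ⋯ < 1̄` with `{1, …, 2n}` via `ī = 2n+1-i`):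
`r(x,y) = α_{x,y-1}` if `y ≤ n`; `r(x,y) = α_{x,(2n+1-y)̄}` if `x ≤ n < y ≤ 2n+1-x`;
`r(x,y) = α_{2n+1-y,x̄}` if `x ≤ n` and `y > 2n+1-x`; `r(x,y) = α_{2n+1-y,2n-x}` if `n < x`. -/
def rIdxXY (n x y : ℕ) : ℕ × ℕ × Bool :=
  if y ≤ n then (x, y - 1, false)
  else if x ≤ n then
    if y ≤ 2*n + 1 - x then rIdx n x (2*n + 1 - y) true
    else rIdx n (2*n + 1 - y) x true
  else (2*n + 1 - y, 2*n - x, false)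

/-!
Write `x̄ = 2n + 1 - x`. The array `(x, y) ↦ d(r(x, y))` on the triangle `x < y` is invariant under
the reflection `(x, y) ↦ (ȳ, x̄)`. Up to this reflection, the exchange inequalities for the unit
squares inside the triangle are exactly (B), (C) and (D), type (D) being the squares that are their
own mirror image. The exchange inequality for a rectangle is the sum of those for its unit squares.
-/

theorem rectangle_exchange_lt_of_unit_squares {α β G : Type*}
    [PartialOrder α] [Add α] [One α] [SuccAddOrder α] [IsSuccArchimedean α]
    [PartialOrder β] [Add β] [One β] [SuccAddOrder β] [IsSuccArchimedean β]
    [AddCommGroup G] [PartialOrder G] [IsOrderedAddMonoid G]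
    {f : α → β → G} {a b : α} {c e : β} (hab : a < b) (hce : c < e)
    (hf : ∀ x ∈ Set.Ico a b, ∀ y ∈ Set.Ico c e,
      f x (y + 1) + f (x + 1) y < f x y + f (x + 1) (y + 1)) :
    f a e + f b c < f a c + f b e := by
  have strictMonoOn_step (x) (hx : x ∈ Set.Ico a b) :
      StrictMonoOn (fun y => f (x + 1) y - f x y) (Set.Icc c e) := by
    refine strictMonoOn_of_lt_add_one Set.ordConnected_Icc fun y hmax hy hy' => ?_
    have hye : y < e := (Order.lt_succ_of_not_isMax hmax).trans_le (Order.succ_eq_add_one y ▸ hy'.2)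
    simpa only [sub_lt_sub_iff, add_comm] using hf x hx y ⟨hy.1, hye⟩
  have strictMonoOn_width : StrictMonoOn (fun x => f x e - f x c) (Set.Icc a b) := by
    refine strictMonoOn_of_lt_add_one Set.ordConnected_Icc fun x hmax hx hx' => ?_
    have hxb : x < b := (Order.lt_succ_of_not_isMax hmax).trans_le (Order.succ_eq_add_one x ▸ hx'.2)
    simpa only [sub_lt_sub_iff, add_comm] using strictMonoOn_step x ⟨hx.1, hxb⟩
      (Set.left_mem_Icc.2 hce.le) (Set.right_mem_Icc.2 hce.le) hce
  simpa only [sub_lt_sub_iff, add_comm] using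
    strictMonoOn_width (Set.left_mem_Icc.2 hab.le) (Set.right_mem_Icc.2 hab.le) hab

theorem rIdxXY_reflect {n x y x' y' : ℕ} (hxy : x ≤ y) (hx : x + y' = 2 * n + 1)
    (hy : y + x' = 2 * n + 1) : rIdxXY n x' y' = rIdxXY n x y := by
  obtain rfl : y' = 2 * n + 1 - x := by omega
  obtain rfl : x' = 2 * n + 1 - y := by omega
  unfold rIdxXY
  split_ifs <;> grind

section

variable {n : ℕ} (d : SpRoot n → ℝ) {x k : ℕ}

theorem dval_rIdxXY_add_one (hxk : x ≤ k) (hk : k ≤ n) :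
    dval d (rIdxXY n x (k + 1)) = dA d x k := by
  have : rIdxXY n x (k + 1) = (x, k, false) := by grind [rIdxXY, rIdx]
  rw [this, dA]

theorem dval_rIdxXY_bar {y : ℕ} (hxk : x ≤ k) (hk : k ≤ n) (hy : k + y = 2 * n + 1) :
    dval d (rIdxXY n x y) = dB d x k := by
  have : rIdxXY n x y = rIdx n x k true := by grind [rIdxXY]
  rw [this, dB]

end

section

variable {n : ℕ} {d : SpRoot n → ℝ} {i j x y : ℕ}

theorem dA_exchange_lt (hd : d ∈ KconeStrict n) (hi : 1 ≤ i) (hij : i < j) (hj : j + 1 ≤ n) :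
    dA d i (j + 1) + dA d (i + 1) j < dA d i j + dA d (i + 1) (j + 1) :=
  hd (.B, i, j) (.inr (.inl ⟨rfl, hi, hij, hj⟩))

theorem dB_exchange_lt (hd : d ∈ KconeStrict n) (hi : 1 ≤ i) (hij : i < j) (hj : j + 1 ≤ n) :
    dB d i j + dB d (i + 1) (j + 1) < dB d i (j + 1) + dB d (i + 1) j :=
  hd (.C, i, j) (.inr (.inr (.inl ⟨rfl, hi, hij, hj⟩)))

theorem dB_diagonal_lt (hd : d ∈ KconeStrict n) (hi : 1 ≤ i) (hin : i + 1 ≤ n) :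
    dB d i i + dB d (i + 1) (i + 1) < 2 * dB d i (i + 1) :=
  hd (.D, i, i + 1) (.inr (.inr (.inr ⟨rfl, hi, hin, rfl⟩)))

theorem unit_square_exchange_lt_of_add_le (hd : d ∈ KconeStrict n) (hx : 1 ≤ x) (hxy : x + 1 < y)
    (hsum : x + y ≤ 2 * n) :
    dval d (rIdxXY n x (y + 1)) + dval d (rIdxXY n (x + 1) y) <
      dval d (rIdxXY n x y) + dval d (rIdxXY n (x + 1) (y + 1)) := by
  rcases le_or_gt y n with hyn | hny
  · obtain ⟨k, rfl⟩ : ∃ k, y = k + 1 := ⟨y - 1, by omega⟩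
    repeat rw [dval_rIdxXY_add_one d (by omega) (by omega)]
    exact dA_exchange_lt hd hx (by omega) hyn
  · obtain ⟨k, hk⟩ : ∃ k, k + y = 2 * n := ⟨2 * n - y, by omega⟩
    have hxk : x ≤ k := by omega
    rw [dval_rIdxXY_bar d (k := k) hxk (by omega) (by omega),
      dval_rIdxXY_bar d (k := k + 1) (by omega) (by omega) (by omega),
      dval_rIdxXY_bar d (k := k + 1) (by omega) (by omega) (by omega)]
    rcases hxk.eq_or_lt with rfl | hlt
    · rw [← rIdxXY_reflect (x' := x) (y' := y) (by omega) (by omega) (by omega),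
        dval_rIdxXY_bar d (k := x + 1) (by omega) (by omega) (by omega), ← two_mul]
      exact dB_diagonal_lt hd hx (by omega)
    · rw [dval_rIdxXY_bar d (k := k) (by omega) (by omega) (by omega)]
      linarith [dB_exchange_lt hd hx hlt (by omega)]

theorem unit_square_exchange_lt (hd : d ∈ KconeStrict n) (hx : 1 ≤ x) (hxy : x + 1 < y)
    (hy : y + 1 ≤ 2 * n) :
    dval d (rIdxXY n x (y + 1)) + dval d (rIdxXY n (x + 1) y) <
      dval d (rIdxXY n x y) + dval d (rIdxXY n (x + 1) (y + 1)) := by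
  rcases le_total (x + y) (2 * n) with hsum | hsum
  · exact unit_square_exchange_lt_of_add_le hd hx hxy hsum
  · obtain ⟨x', hx'⟩ : ∃ x', y + x' = 2 * n := ⟨2 * n - y, by omega⟩
    obtain ⟨y', hy'⟩ : ∃ y', x + y' = 2 * n := ⟨2 * n - x, by omega⟩
    have h := unit_square_exchange_lt_of_add_le hd (x := x') (y := y') (by omega)
      (by omega) (by omega)
    rwa [show rIdxXY n x' (y' + 1) = rIdxXY n x (y + 1) from
        rIdxXY_reflect (by omega) (by omega) (by omega),
      show rIdxXY n (x' + 1) y' = rIdxXY n (x + 1) y from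
        rIdxXY_reflect (by omega) (by omega) (by omega),
      show rIdxXY n x' y' = rIdxXY n (x + 1) (y + 1) from
        rIdxXY_reflect (by omega) (by omega) (by omega),
      show rIdxXY n (x' + 1) (y' + 1) = rIdxXY n x y from
        rIdxXY_reflect (by omega) (by omega) (by omega),
      add_comm (dval d (rIdxXY n (x + 1) (y + 1)))] at h

end

/-- If `d` satisfies every defining inequality of `K_{2n}` strictly, then for
all `1 ≤ a < b < c < e ≤ 2n` the strict rectangle-exchange inequality
`d(r(a,e)) + d(r(b,c)) < d(r(a,c)) + d(r(b,e))` holds. -/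
theorem spFFLV_rectangle_exchange (n : ℕ) (hn : 2 ≤ n)
    (d : SpRoot n → ℝ) (hd : d ∈ KconeStrict n)
    (a b c e : ℕ) (ha : 1 ≤ a) (hab : a < b) (hbc : b < c) (hce : c < e) (he : e ≤ 2*n) :
    dval d (rIdxXY n a e) + dval d (rIdxXY n b c) <
      dval d (rIdxXY n a c) + dval d (rIdxXY n b e) := by
  refine rectangle_exchange_lt_of_unit_squares (f := fun x y => dval d (rIdxXY n x y)) hab hce ?_
  rintro x ⟨hax, hxb⟩ y ⟨hcy, hye⟩
  exact unit_square_exchange_lt hd (by omega) (by omega) (by omega)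
end

section
/- For every 1 ≤ k ≤ n, the set of lattice points of the fundamental symplectic FFLV polytope satisfies S(ω_k) = { s_{[k],J} : J ⊆ {1,…,2n}, |J| = k }. -/
/-- Successor in the ordered index set `1 < 2 < ⋯ < n < (n-1)̄ < ⋯ < 1̄` of second
coordinates of roots (second component is the "barred" flag). -/
def qSucc (n : ℕ) : ℕ × Bool → ℕ × Bool
  | (j, true) => (j - 1, true)
  | (j, false) => if j = n then (n - 1, true) else (j + 1, false)

/-- The Dyck path recursion: from `α_{p,q}` one moves to `α_{p,q⁺}` or `α_{p+1,q}`. -/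
def SpDyckStep (n : ℕ) (s t : ℕ × ℕ × Bool) : Prop :=
  t = (s.1, (qSucc n (s.2.1, s.2.2)).1, (qSucc n (s.2.1, s.2.2)).2) ∨
  t = (s.1 + 1, s.2.1, s.2.2)

/-- Index of a simple root `α_i = α_{i,i}`. -/
def IsSimpleIdx (n : ℕ) (t : ℕ × ℕ × Bool) : Prop :=
  ∃ i : ℕ, 1 ≤ i ∧ i ≤ n ∧ t = (i, i, false)

/-- Admissible last element of a symplectic Dyck path: a simple root or `α_{j,j̄}`, `j ≤ n-1`. -/
def IsDyckEndIdx (n : ℕ) (t : ℕ × ℕ × Bool) : Prop :=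
  IsSimpleIdx n t ∨ ∃ j : ℕ, 1 ≤ j ∧ j + 1 ≤ n ∧ t = (j, j, true)

/-- A symplectic Dyck path, encoded as a nonempty list of positive roots. -/
def IsDyckPath (n : ℕ) (L : List (SpRoot n)) : Prop :=
  L ≠ [] ∧
  (∀ h ∈ L.head?, IsSimpleIdx n h.val) ∧
  (∀ l ∈ L.getLast?, IsDyckEndIdx n l.val) ∧
  L.Chain' (fun a b => SpDyckStep n a.val b.val)

/-- The symplectic FFLV polytope `FFLV(λ) ⊆ ℝ^{Φ⁺}` for `λ = m₁ω₁ + ⋯ + m_nω_n`. -/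
def FFLVpoly (n : ℕ) (m : ℕ → ℕ) : Set (SpRoot n → ℝ) :=
  {x | (∀ β, 0 ≤ x β) ∧
    ∀ L : List (SpRoot n), IsDyckPath n L →
      ∀ hd lst : SpRoot n, L.head? = some hd → L.getLast? = some lst →
        ∀ i : ℕ, hd.val = (i, i, false) →
          (∀ j : ℕ, lst.val = (j, j, false) →
            (L.map x).sum ≤ ∑ t ∈ Finset.Icc i j, (m t : ℝ)) ∧
          (∀ j : ℕ, lst.val = (j, j, true) →
            (L.map x).sum ≤ ∑ t ∈ Finset.Icc i n, (m t : ℝ))}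

/-- `S(λ)`: the set of lattice points of `FFLV(λ)`. -/
def Slat (n : ℕ) (m : ℕ → ℕ) : Set (SpRoot n → ℕ) :=
  {s | (fun β => (s β : ℝ)) ∈ FFLVpoly n m}

/-- The multi-exponent `s_{[k],J} ∈ ℕ^{Φ⁺}`: with `{p₁ < ⋯ < p_s} = {1,…,k} ∖ J` and
`{q₁ < ⋯ < q_s} = J ∖ {1,…,k}`, it is the sum of the indicator vectors of the roots
`r(p_r, q_{s+1-r})`. -/
noncomputable def sKJ (n k : ℕ) (J : Finset ℕ) : SpRoot n → ℕ :=
  fun β =>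
    (List.zip ((Finset.Icc 1 k \ J).sort (· ≤ ·))
              (((J \ Finset.Icc 1 k).sort (· ≤ ·)).reverse)).countP
      (fun pq => decide (rIdxXY n pq.1 pq.2 = β.val))

/-!
Place the root `β` with `β = r(x, y)`, `x + y ≤ 2n + 1`, at the point `(x, y)` of `ℕ × ℕ`. For the
induced product order the Dyck steps are exactly the covering relations, so every chain of roots
extends to a Dyck path whose initial root has the same `x` as the bottom of the chain and whose
final root has the same `y` as the top. For `λ = ω_k` the right-hand side of the path inequality
is `1` if `x ≤ k < y` for these two coordinates and `0` otherwise. Hence the lattice points of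
`FFLV(ω_k)` are the indicators of the antichains of roots involving `α_k`.

On the other side, the pairs `(p_r, q_{s+1-r})` have increasing first and decreasing second
coordinates, and `J` can be recovered from them. Those with `x + y > 2n + 1` are reflected in the
line `x + y = 2n + 1` to become positions of roots; since a pair beyond the line stays incomparable
to the others after reflection, the resulting roots again form an antichain.
-/

section Lists

/-- The strict nesting relation on pairs, regarded as intervals: `c` contains `d` in its
interior. -/
def Encloses {α β : Type*} [LT α] [LT β] (c d : α × β) : Prop :=
  c.1 < d.1 ∧ d.2 < c.2

/-- The list of pairs matching the elements of `s` in increasing order with those of `t` in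
decreasing order, truncated to the shorter of the two. -/
def nestedPairing {α β : Type*} [LinearOrder α] [LinearOrder β] (s : Finset α) (t : Finset β) :
    List (α × β) :=
  List.zip (s.sort (· ≤ ·)) (t.sort (· ≤ ·)).reverse

variable {α β : Type*}

lemma pairwise_encloses_nestedPairing [LinearOrder α] [LinearOrder β] (s : Finset α)
    (t : Finset β) : (nestedPairing s t).Pairwise Encloses := by
  have hs := s.sortedLT_sort.pairwise
  have ht := t.sortedLT_sort.reverse.pairwise
  rw [List.pairwise_iff_getElem] at hs ht ⊢
  intro i j hi hj hij
  simp only [nestedPairing, List.length_zip, lt_min_iff] at hi hj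
  simp only [nestedPairing, List.getElem_zip]
  exact ⟨hs i j hi.1 hj.1 hij, ht i j hi.2 hj.2 hij⟩

lemma nestedPairing_toFinset_of_pairwise_encloses [LinearOrder α] [LinearOrder β]
    {l : List (α × β)} (hl : l.Pairwise Encloses) :
    nestedPairing (l.map Prod.fst).toFinset (l.map Prod.snd).toFinset = l := by
  have hfst : (l.map Prod.fst).SortedLT :=
    (List.pairwise_map.2 (hl.imp And.left)).sortedLT
  have hsnd : (l.map Prod.snd).SortedGT :=
    (List.pairwise_map.2 (hl.imp And.right)).sortedGT
  have hsort_fst : (l.map Prod.fst).toFinset.sort (· ≤ ·) = l.map Prod.fst :=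
    (Finset.sortedLT_sort _).eq_of_mem_iff hfst (by simp)
  have hsort_snd : ((l.map Prod.snd).toFinset.sort (· ≤ ·)).reverse = l.map Prod.snd :=
    (Finset.sortedLT_sort _).reverse.eq_of_mem_iff hsnd (by simp)
  rw [nestedPairing, hsort_fst, hsort_snd, List.zip_map']
  exact List.map_id l

lemma exists_isChain_covBy_of_sortedLT [PartialOrder α] [LocallyFiniteOrder α] {L : List α}
    (hL : L.SortedLT) {u v : α} (huv : u ≤ v) (hu : ∀ c ∈ L, u ≤ c) (hv : ∀ c ∈ L, c ≤ v) :
    ∃ M : List α, M.IsChain (· ⋖ ·) ∧ M.head? = some u ∧ M.getLast? = some v ∧ L ⊆ M := by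
  have saturate {a b : α} (hab : a ≤ b) :
      ∃ M : List α, M.IsChain (· ⋖ ·) ∧ M.head? = some a ∧ M.getLast? = some b := by
    obtain ⟨l, hl, hlast⟩ :=
      List.exists_isChain_cons_of_relationReflTransGen (le_iff_reflTransGen_covBy.1 hab)
    exact ⟨a :: l, hl, rfl, by rw [List.getLast?_eq_some_getLast (by simp), hlast]⟩
  induction L generalizing u with
  | nil =>
    obtain ⟨M, hM, hMu, hMv⟩ := saturate huv
    exact ⟨M, hM, hMu, hMv, List.nil_subset M⟩
  | cons c L ih =>
    obtain ⟨hcL, hL⟩ := List.pairwise_cons.1 hL.pairwise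
    obtain ⟨M₁, hM₁, hM₁u, hM₁c⟩ := saturate (hu c List.mem_cons_self)
    obtain ⟨M₂, hM₂, hM₂c, hM₂v, hLM₂⟩ := ih hL.sortedLT (hv c List.mem_cons_self)
      (fun d hd => (hcL d hd).le) (fun d hd => hv d (List.mem_cons_of_mem c hd))
    obtain ⟨xs, rfl⟩ := List.getLast?_eq_some_iff.1 hM₁c
    obtain ⟨ys, rfl⟩ := List.head?_eq_some_iff.1 hM₂c
    refine ⟨xs ++ c :: ys, List.isChain_split.2 ⟨hM₁, hM₂⟩, ?_, ?_, ?_⟩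
    · simpa [List.head?_append] using hM₁u
    · simp [List.getLast?_append, hM₂v]
    · exact List.cons_subset.2 ⟨by simp, List.Subset.trans hLM₂ (List.subset_append_right xs _)⟩

lemma sum_map_le_sum_map_of_nodup_of_subset {M : Type*} [AddCommMonoid M]
    [PartialOrder M] [CanonicallyOrderedAdd M] (f : α → M) {L L' : List α} (hL : L.Nodup)
    (hLL' : L ⊆ L') : (L.map f).sum ≤ (L'.map f).sum := by
  obtain ⟨L'', hperm, hsub⟩ := hL.subperm hLL'
  rw [← (hperm.map f).sum_eq]
  exact (hsub.map f).sum_le_sum (by simp)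

lemma sum_map_indicator_le_one_of_isAntichain [Preorder α] {A : Set α}
    (hA : IsAntichain (· ≤ ·) A) {L : List α} (hL : L.SortedLT) :
    (L.map (A.indicator (1 : α → ℕ))).sum ≤ 1 := by
  induction L with
  | nil => simp
  | cons c L ih =>
    obtain ⟨hcL, hL⟩ := List.pairwise_cons.1 hL.pairwise
    rw [List.map_cons, List.sum_cons]
    by_cases hc : c ∈ A
    · have hzero : (L.map (A.indicator (1 : α → ℕ))).sum = 0 := by
        refine List.sum_eq_zero fun v hv => ?_
        obtain ⟨d, hd, rfl⟩ := List.mem_map.1 hv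
        exact Set.indicator_of_notMem (fun hdA => hA.not_lt hc hdA (hcL d hd)) _
      rw [hzero, Set.indicator_of_mem hc, Pi.one_apply]
    · rw [Set.indicator_of_notMem hc, zero_add]
      exact ih hL.sortedLT

end Lists

namespace SpRoot

variable {n : ℕ}

/-- The position `(x, y)` of a root in the plane: the pair with `x + y ≤ 2n + 1` such that the
root is `r(x, y)`. -/
def cell (β : SpRoot n) : ℕ × ℕ :=
  (β.val.1, if β.val.2.2 = true then 2 * n + 1 - β.val.2.1 else β.val.2.1 + 1)

lemma one_le_cell_fst (β : SpRoot n) : 1 ≤ β.cell.1 :=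
  β.property.1

lemma cell_fst_lt_cell_snd (β : SpRoot n) : β.cell.1 < β.cell.2 := by
  obtain ⟨⟨i, j, b⟩, hβ⟩ := β
  grind [cell, IsSpRootIdx]

lemma cell_fst_add_cell_snd_le (β : SpRoot n) : β.cell.1 + β.cell.2 ≤ 2 * n + 1 := by
  obtain ⟨⟨i, j, b⟩, hβ⟩ := β
  grind [cell, IsSpRootIdx]

lemma cell_injective : Function.Injective (cell : SpRoot n → ℕ × ℕ) := by
  rintro ⟨⟨i, j, b⟩, hβ⟩ ⟨⟨i', j', b'⟩, hβ'⟩ h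
  apply Subtype.ext
  grind [cell, IsSpRootIdx]

lemma exists_cell_eq {x y : ℕ} (hx : 1 ≤ x) (hxy : x < y) (hn : x + y ≤ 2 * n + 1) :
    ∃ β : SpRoot n, β.cell = (x, y) := by
  by_cases hy : y ≤ n + 1
  · exact ⟨⟨(x, y - 1, false), by grind [IsSpRootIdx]⟩, by grind [cell]⟩
  · exact ⟨⟨(x, 2 * n + 1 - y, true), by grind [IsSpRootIdx]⟩, by grind [cell]⟩

/-- Roots are ordered by the product order of their positions. -/
instance : PartialOrder (SpRoot n) :=
  PartialOrder.lift cell cell_injective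

lemma le_iff {a b : SpRoot n} : a ≤ b ↔ a.cell.1 ≤ b.cell.1 ∧ a.cell.2 ≤ b.cell.2 :=
  Iff.rfl

lemma lt_iff {a b : SpRoot n} :
    a < b ↔ a.cell.1 < b.cell.1 ∧ a.cell.2 ≤ b.cell.2 ∨
      a.cell.1 ≤ b.cell.1 ∧ a.cell.2 < b.cell.2 :=
  Prod.lt_iff

instance : Finite (SpRoot n) := by
  refine Set.finite_univ_iff.1 (Set.Finite.of_injOn (f := cell)
    (t := Set.Icc (0, 0) (2 * n, 2 * n + 1)) (fun β _ => ?_) cell_injective.injOn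
    (Set.finite_Icc _ _))
  have := β.cell_fst_add_cell_snd_le
  have := β.cell_fst_lt_cell_snd
  exact ⟨⟨Nat.zero_le _, Nat.zero_le _⟩, ⟨by dsimp; omega, by dsimp; omega⟩⟩

noncomputable instance : LocallyFiniteOrder (SpRoot n) :=
  LocallyFiniteOrder.ofFiniteIcc fun _ _ => Set.toFinite _

lemma spDyckStep_iff_cell {a b : SpRoot n} : SpDyckStep n a.val b.val ↔
    b.cell = (a.cell.1, a.cell.2 + 1) ∨ b.cell = (a.cell.1 + 1, a.cell.2) := by
  obtain ⟨⟨i, j, s⟩, ha⟩ := a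
  obtain ⟨⟨i', j', t⟩, hb⟩ := b
  cases s <;> cases t <;> grind [cell, IsSpRootIdx, SpDyckStep, qSucc]

lemma spDyckStep_iff_covBy {a b : SpRoot n} : SpDyckStep n a.val b.val ↔ a ⋖ b := by
  rw [spDyckStep_iff_cell]
  constructor
  · intro h
    simp only [Prod.ext_iff] at h
    refine ⟨lt_iff.2 (by omega), fun c hac hcb => ?_⟩
    rw [lt_iff] at hac hcb
    omega
  · intro h
    have hab := lt_iff.1 h.lt
    have ha := a.one_le_cell_fst
    have ha' := a.cell_fst_lt_cell_snd
    have hb := b.cell_fst_lt_cell_snd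
    have hb' := b.cell_fst_add_cell_snd_le
    have of_cell_eq {p : ℕ × ℕ} (hp : ∃ c : SpRoot n, c.cell = p) (hap : a.cell < p)
        (hpb : p ≤ b.cell) : b.cell = p := by
      obtain ⟨c, rfl⟩ := hp
      have hac : a < c := hap
      rw [(h.eq_or_eq hac.le hpb).resolve_left hac.ne']
    by_cases hsnd : a.cell.2 < b.cell.2
    · refine .inl (of_cell_eq (exists_cell_eq ha (by omega) (by omega)) ?_ ?_)
      · exact Prod.lt_iff.2 (.inr ⟨le_rfl, Nat.lt_succ_self _⟩)
      · exact ⟨by dsimp; omega, hsnd⟩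
    · refine .inr (of_cell_eq (exists_cell_eq (by omega) (by omega) (by omega)) ?_ ?_)
      · exact Prod.lt_iff.2 (.inl ⟨Nat.lt_succ_self _, le_rfl⟩)
      · exact ⟨by dsimp; omega, by dsimp; omega⟩

lemma isSimpleIdx_iff {β : SpRoot n} : IsSimpleIdx n β.val ↔ β.cell.2 = β.cell.1 + 1 := by
  obtain ⟨⟨i, j, b⟩, hβ⟩ := β
  grind [cell, IsSpRootIdx, IsSimpleIdx]

lemma isDyckEndIdx_iff {β : SpRoot n} : IsDyckEndIdx n β.val ↔
    β.cell.2 = β.cell.1 + 1 ∨ β.cell.1 + β.cell.2 = 2 * n + 1 := by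
  rw [IsDyckEndIdx, isSimpleIdx_iff]
  obtain ⟨⟨i, j, b⟩, hβ⟩ := β
  grind [cell, IsSpRootIdx]

lemma exists_isSimpleIdx_le (a : SpRoot n) :
    ∃ u ≤ a, IsSimpleIdx n u.val ∧ u.cell.1 = a.cell.1 := by
  have ha := a.cell_fst_lt_cell_snd
  have ha' := a.cell_fst_add_cell_snd_le
  obtain ⟨u, hu⟩ := exists_cell_eq (n := n) a.one_le_cell_fst (Nat.lt_succ_self _) (by omega)
  rw [Prod.ext_iff] at hu
  exact ⟨u, le_iff.2 (by omega), isSimpleIdx_iff.2 (by omega), hu.1⟩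

lemma exists_isDyckEndIdx_ge (b : SpRoot n) :
    ∃ v ≥ b, IsDyckEndIdx n v.val ∧ v.cell.2 = b.cell.2 := by
  have hb := b.one_le_cell_fst
  have hb' := b.cell_fst_lt_cell_snd
  have hb'' := b.cell_fst_add_cell_snd_le
  obtain ⟨v, hv⟩ := exists_cell_eq (n := n) (x := min (b.cell.2 - 1) (2 * n + 1 - b.cell.2))
    (y := b.cell.2) (by omega) (by omega) (by omega)
  rw [Prod.ext_iff] at hv
  exact ⟨v, le_iff.2 (by omega), isDyckEndIdx_iff.2 (by omega), hv.2⟩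

/-- The right-hand side of the FFLV inequality of a Dyck path from `a` to `b`, written so that it
makes sense for all pairs of roots and covers both kinds of end points. -/
def weightBound (m : ℕ → ℕ) (a b : SpRoot n) : ℕ :=
  ∑ t ∈ Finset.Icc a.cell.1 (min (b.cell.2 - 1) n), m t

lemma weightBound_of_val_eq_false (m : ℕ → ℕ) {a b : SpRoot n} {i j : ℕ}
    (ha : a.val = (i, i, false)) (hb : b.val = (j, j, false)) :
    weightBound m a b = ∑ t ∈ Finset.Icc i j, m t := by
  have hj : j ≤ n := by simpa only [hb] using b.property.2.2.1
  simp [weightBound, cell, ha, hb, hj]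

lemma weightBound_of_val_eq_true (m : ℕ → ℕ) {a b : SpRoot n} {i j : ℕ}
    (ha : a.val = (i, i, false)) (hb : b.val = (j, j, true)) :
    weightBound m a b = ∑ t ∈ Finset.Icc i n, m t := by
  have hj : j ≤ n := by simpa only [hb] using b.property.2.2.1
  have hmin : min (2 * n + 1 - j - 1) n = n := by omega
  simp [weightBound, cell, ha, hb, hmin]

lemma mem_Slat_iff_forall_isDyckPath {m : ℕ → ℕ} {s : SpRoot n → ℕ} : s ∈ Slat n m ↔
    ∀ L : List (SpRoot n), IsDyckPath n L → ∀ a ∈ L.head?, ∀ b ∈ L.getLast?,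
      (L.map s).sum ≤ weightBound m a b := by
  have hcast (L : List (SpRoot n)) :
      (L.map fun β => (s β : ℝ)).sum = ((L.map s).sum : ℕ) := by
    rw [Nat.cast_list_sum, List.map_map, Function.comp_def]
  constructor
  · rintro ⟨-, hpath⟩ L hL a ha b hb
    obtain ⟨i, -, -, hi⟩ := hL.2.1 a ha
    obtain ⟨hfalse, htrue⟩ := hpath L hL a b ha hb i hi
    rcases hL.2.2.1 b hb with ⟨j, -, -, hj⟩ | ⟨j, -, -, hj⟩
    · rw [weightBound_of_val_eq_false m hi hj]
      exact_mod_cast hcast L ▸ hfalse j hj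
    · rw [weightBound_of_val_eq_true m hi hj]
      exact_mod_cast hcast L ▸ htrue j hj
  · refine fun h => ⟨fun β => Nat.cast_nonneg _, fun L hL a b ha hb i hi => ?_⟩
    rw [hcast]
    refine ⟨fun j hj => ?_, fun j hj => ?_⟩
    · exact_mod_cast weightBound_of_val_eq_false m hi hj ▸ h L hL a ha b hb
    · exact_mod_cast weightBound_of_val_eq_true m hi hj ▸ h L hL a ha b hb

theorem mem_Slat_iff_forall_sortedLT {m : ℕ → ℕ} {s : SpRoot n → ℕ} : s ∈ Slat n m ↔
    ∀ L : List (SpRoot n), L.SortedLT → ∀ a b, (∀ c ∈ L, a ≤ c) → (∀ c ∈ L, c ≤ b) →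
      (L.map s).sum ≤ weightBound m a b := by
  rw [mem_Slat_iff_forall_isDyckPath]
  constructor
  · intro h L hL a b ha hb
    rcases L.eq_nil_or_concat with rfl | ⟨L, c, rfl⟩
    · exact Nat.zero_le _
    have hab : a ≤ b := (ha c (by simp)).trans (hb c (by simp))
    obtain ⟨u, hua, hu, hu_fst⟩ := a.exists_isSimpleIdx_le
    obtain ⟨v, hbv, hv, hv_snd⟩ := b.exists_isDyckEndIdx_ge
    obtain ⟨M, hM, hMu, hMv, hLM⟩ := exists_isChain_covBy_of_sortedLT hL
      (hua.trans (hab.trans hbv)) (fun c hc => hua.trans (ha c hc))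
      (fun c hc => (hb c hc).trans hbv)
    have hpath : IsDyckPath n M := by
      refine ⟨?_, ?_, ?_, hM.imp fun _ _ => spDyckStep_iff_covBy.2⟩
      · rintro rfl
        simp at hMu
      · simpa [hMu] using hu
      · simpa [hMv] using hv
    calc _ ≤ (M.map s).sum := sum_map_le_sum_map_of_nodup_of_subset s hL.nodup hLM
      _ ≤ weightBound m u v := h M hpath u hMu v hMv
      _ = weightBound m a b := by rw [weightBound, weightBound, hu_fst, hv_snd]
  · intro h L ⟨_, _, _, hstep⟩ a ha b hb
    have hL : L.SortedLT :=
      (hstep.imp fun _ _ hcd => (spDyckStep_iff_covBy.1 hcd).lt).sortedLT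
    obtain ⟨L₁, rfl⟩ := List.head?_eq_some_iff.1 ha
    have hle := hL.sortedLE.pairwise
    refine h _ hL a b (fun c hc => hle.rel_head hc) fun c hc => ?_
    have := hle.rel_getLast hc
    rwa [List.getLast_of_getLast?_eq_some hb] at this

/-- The roots in which the simple root `α_k` occurs, for `1 ≤ k ≤ n`. -/
def involving (k : ℕ) : Set (SpRoot n) :=
  {β | β.cell.1 ≤ k ∧ k < β.cell.2}

lemma weightBound_fundamental {k : ℕ} (hkn : k ≤ n) (a b : SpRoot n) :
    weightBound (fun t => if t = k then 1 else 0) a b =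
      if a.cell.1 ≤ k ∧ k < b.cell.2 then 1 else 0 := by
  rw [weightBound, Finset.sum_ite_eq']
  refine if_congr ?_ rfl rfl
  have := b.cell_fst_lt_cell_snd
  rw [Finset.mem_Icc]
  omega

lemma exists_isAntichain_eq_indicator_of_mem_Slat {k : ℕ} (hkn : k ≤ n) {s : SpRoot n → ℕ}
    (hs : s ∈ Slat n (fun t => if t = k then 1 else 0)) :
    ∃ A : Set (SpRoot n), IsAntichain (· ≤ ·) A ∧ A ⊆ involving k ∧ A.indicator 1 = s := by
  simp only [mem_Slat_iff_forall_sortedLT, weightBound_fundamental hkn] at hs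
  have hone (β : SpRoot n) : s β ≤ if β.cell.1 ≤ k ∧ k < β.cell.2 then 1 else 0 := by
    simpa using hs [β] (List.pairwise_singleton _ _).sortedLT β β
  have htwo {a b : SpRoot n} (hab : a < b) : s a + s b ≤ 1 := by
    refine le_trans ?_ ((hs [a, b] (List.pairwise_pair.2 hab).sortedLT a b ?_ ?_).trans ?_)
    · simp
    · simp [hab.le]
    · simp [hab.le]
    · split_ifs <;> simp
  refine ⟨Function.support s, fun a ha b hb hne hab => ?_, fun β hβ => ?_, ?_⟩
  · have := htwo (lt_of_le_of_ne hab hne)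
    rw [Function.mem_support] at ha hb
    omega
  · by_contra hk
    exact hβ (Nat.le_zero.1 ((hone β).trans_eq (if_neg hk)))
  · ext β
    have : s β ≤ 1 := (hone β).trans (by split_ifs <;> simp)
    by_cases hβ : s β = 0
    · simp [hβ]
    · rw [Set.indicator_of_mem (Function.mem_support.2 hβ), Pi.one_apply]
      omega

lemma indicator_mem_Slat_of_isAntichain {k : ℕ} (hkn : k ≤ n) {A : Set (SpRoot n)}
    (hA : IsAntichain (· ≤ ·) A) (hAk : A ⊆ involving k) :
    A.indicator 1 ∈ Slat n (fun t => if t = k then 1 else 0) := by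
  rw [mem_Slat_iff_forall_sortedLT]
  intro L hL a b ha hb
  rw [weightBound_fundamental hkn]
  split_ifs with hab
  · exact sum_map_indicator_le_one_of_isAntichain hA hL
  · refine (List.sum_eq_zero fun v hv => ?_).le
    obtain ⟨c, hc, rfl⟩ := List.mem_map.1 hv
    refine Set.indicator_of_notMem (fun hcA => hab ?_) _
    exact ⟨(ha c hc).1.trans (hAk hcA).1, (hAk hcA).2.trans_le (hb c hc).2⟩

theorem Slat_fundamental_eq_image_indicator {k : ℕ} (hkn : k ≤ n) :
    Slat n (fun t => if t = k then 1 else 0) =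
      (fun A : Set (SpRoot n) => A.indicator 1) ''
        {A | IsAntichain (· ≤ ·) A ∧ A ⊆ involving k} := by
  ext s
  constructor
  · intro hs
    obtain ⟨A, hA, hAk, rfl⟩ := exists_isAntichain_eq_indicator_of_mem_Slat hkn hs
    exact ⟨A, ⟨hA, hAk⟩, rfl⟩
  · rintro ⟨A, ⟨hA, hAk⟩, rfl⟩
    exact indicator_mem_Slat_of_isAntichain hkn hA hAk

end SpRoot

section Pairings

open SpRoot

variable {n k : ℕ} {J : Finset ℕ}

/-- The reflection of the pairs with `x + y > 2n + 1` in the line `x + y = 2n + 1`; it sends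
`(x, y)` to the position of the root `r(x, y)`. -/
def foldCell (n : ℕ) (c : ℕ × ℕ) : ℕ × ℕ :=
  if c.1 + c.2 ≤ 2 * n + 1 then c else (2 * n + 1 - c.2, 2 * n + 1 - c.1)

lemma foldCell_of_le {c : ℕ × ℕ} (hc : c.1 + c.2 ≤ 2 * n + 1) : foldCell n c = c :=
  if_pos hc

lemma rIdxXY_eq_val_iff {x y : ℕ} (β : SpRoot n) :
    rIdxXY n x y = β.val ↔ foldCell n (x, y) = β.cell := by
  obtain ⟨⟨i, j, b⟩, hβ⟩ := β
  cases b <;> grind [rIdxXY, rIdx, foldCell, cell, IsSpRootIdx]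

lemma incompRel_foldCell_of_encloses {c d : ℕ × ℕ} (hc : c.2 ≤ 2 * n + 1) (hd : d.1 ≤ 2 * n + 1)
    (hcd : Encloses c d) : IncompRel (· ≤ ·) (foldCell n c) (foldCell n d) := by
  obtain ⟨hfst, hsnd⟩ := hcd
  simp only [IncompRel, Prod.le_def, foldCell]
  split_ifs <;> omega

/-- The pairs `(p_r, q_{s+1-r})` entering `s_{[k],J}`. -/
def exchangePairs (k : ℕ) (J : Finset ℕ) : List (ℕ × ℕ) :=
  nestedPairing (Finset.Icc 1 k \ J) (J \ Finset.Icc 1 k)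

lemma bounds_of_mem_exchangePairs (hJ : J ⊆ Finset.Icc 1 (2 * n)) {c : ℕ × ℕ}
    (hc : c ∈ exchangePairs k J) : 1 ≤ c.1 ∧ c.1 ≤ k ∧ k < c.2 ∧ c.2 ≤ 2 * n := by
  obtain ⟨hfst, hsnd⟩ := List.of_mem_zip hc
  simp only [Finset.mem_sort, List.mem_reverse, Finset.mem_sdiff, Finset.mem_Icc] at hfst hsnd
  have := Finset.mem_Icc.1 (hJ hsnd.1)
  omega

lemma exists_sdiff_eq_and_sdiff_eq {N : ℕ} (hkN : k ≤ N) {P Q : Finset ℕ}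
    (hP : P ⊆ Finset.Icc 1 k) (hQ : Q ⊆ Finset.Ioc k N) (hcard : P.card = Q.card) :
    ∃ J ⊆ Finset.Icc 1 N, J.card = k ∧ Finset.Icc 1 k \ J = P ∧ J \ Finset.Icc 1 k = Q := by
  have hdisj : Disjoint (Finset.Icc 1 k) Q :=
    Finset.disjoint_left.2 fun q hq hqQ =>
      (Finset.mem_Ioc.1 (hQ hqQ)).1.not_ge (Finset.mem_Icc.1 hq).2
  refine ⟨Finset.Icc 1 k \ P ∪ Q, ?_, ?_, ?_, ?_⟩
  · refine Finset.union_subset (Finset.sdiff_subset.trans (Finset.Icc_subset_Icc_right hkN)) ?_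
    exact hQ.trans fun q hq => by rw [Finset.mem_Ioc] at hq; rw [Finset.mem_Icc]; omega
  · rw [Finset.card_union_of_disjoint (hdisj.mono_left Finset.sdiff_subset), ← hcard,
      Finset.card_sdiff_add_card_eq_card hP, Nat.card_Icc, Nat.add_sub_cancel]
  · rw [Finset.sdiff_union_distrib, Finset.sdiff_sdiff_eq_self hP,
      Finset.sdiff_eq_self_of_disjoint hdisj, Finset.inter_eq_left.2 hP]
  · rw [Finset.union_sdiff_distrib, Finset.sdiff_eq_empty_iff_subset.2 Finset.sdiff_subset,
      Finset.empty_union, Finset.sdiff_eq_self_of_disjoint hdisj.symm]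

lemma exists_exchangePairs_eq {N : ℕ} (hkN : k ≤ N) {l : List (ℕ × ℕ)}
    (hl : l.Pairwise Encloses) (hfst : ∀ c ∈ l, c.1 ∈ Finset.Icc 1 k)
    (hsnd : ∀ c ∈ l, c.2 ∈ Finset.Ioc k N) :
    ∃ J ⊆ Finset.Icc 1 N, J.card = k ∧ exchangePairs k J = l := by
  have hfst_subset : (l.map Prod.fst).toFinset ⊆ Finset.Icc 1 k := by
    intro p hp
    obtain ⟨c, hc, rfl⟩ := List.mem_map.1 (List.mem_toFinset.1 hp)
    exact hfst c hc
  have hsnd_subset : (l.map Prod.snd).toFinset ⊆ Finset.Ioc k N := by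
    intro q hq
    obtain ⟨c, hc, rfl⟩ := List.mem_map.1 (List.mem_toFinset.1 hq)
    exact hsnd c hc
  have hcard : (l.map Prod.fst).toFinset.card = (l.map Prod.snd).toFinset.card := by
    rw [List.toFinset_card_of_nodup, List.toFinset_card_of_nodup, List.length_map,
      List.length_map]
    · exact List.pairwise_map.2 (hl.imp fun h => h.2.ne')
    · exact List.pairwise_map.2 (hl.imp fun h => h.1.ne)
  obtain ⟨J, hJ, hJk, hremoved, hadded⟩ :=
    exists_sdiff_eq_and_sdiff_eq hkN hfst_subset hsnd_subset hcard
  refine ⟨J, hJ, hJk, ?_⟩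
  rw [exchangePairs, hremoved, hadded, nestedPairing_toFinset_of_pairwise_encloses hl]

/-- The set of roots `r(p_r, q_{s+1-r})` attached to `J`, given by their positions. -/
def exchangeRoots (n k : ℕ) (J : Finset ℕ) : Set (SpRoot n) :=
  {β | β.cell ∈ (exchangePairs k J).map (foldCell n)}

lemma pairwise_incompRel_map_foldCell_exchangePairs (hJ : J ⊆ Finset.Icc 1 (2 * n)) :
    ((exchangePairs k J).map (foldCell n)).Pairwise (IncompRel (· ≤ ·)) := by
  refine List.pairwise_map.2 ((pairwise_encloses_nestedPairing _ _).imp_of_mem ?_)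
  intro c d hc hd hcd
  have hc := bounds_of_mem_exchangePairs hJ hc
  have hd := bounds_of_mem_exchangePairs hJ hd
  exact incompRel_foldCell_of_encloses (by omega) (by have := hcd.2; omega) hcd

lemma sKJ_eq_indicator_exchangeRoots (hJ : J ⊆ Finset.Icc 1 (2 * n)) :
    sKJ n k J = (exchangeRoots n k J).indicator 1 := by
  ext β
  have hnodup : ((exchangePairs k J).map (foldCell n)).Nodup :=
    (pairwise_incompRel_map_foldCell_exchangePairs hJ).imp fun h => h.ne
  calc sKJ n k J β
      = (exchangePairs k J).countP (fun c => rIdxXY n c.1 c.2 = β.val) := rfl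
    _ = (exchangePairs k J).countP (fun c => foldCell n c = β.cell) := by
        exact List.countP_congr fun c _ => by simpa using rIdxXY_eq_val_iff β
    _ = ((exchangePairs k J).map (foldCell n)).count β.cell := by
        rw [List.count, List.countP_map]
        exact List.countP_congr fun _ _ => by simp
    _ = (exchangeRoots n k J).indicator 1 β := by
        simp only [hnodup.count, Set.indicator_apply, exchangeRoots, Set.mem_ofPred_eq,
          Pi.one_apply]

lemma isAntichain_exchangeRoots (hJ : J ⊆ Finset.Icc 1 (2 * n)) :
    IsAntichain (· ≤ ·) (exchangeRoots n k J) := by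
  intro a ha b hb hab hle
  exact ((pairwise_incompRel_map_foldCell_exchangePairs hJ).forall ha hb
    (cell_injective.ne hab)).not_le hle

lemma exchangeRoots_subset_involving (hkn : k ≤ n) (hJ : J ⊆ Finset.Icc 1 (2 * n)) :
    exchangeRoots n k J ⊆ involving k := by
  intro β hβ
  obtain ⟨c, hc, hcβ⟩ := List.mem_map.1 hβ
  have := bounds_of_mem_exchangePairs hJ hc
  rw [involving, Set.mem_ofPred_eq, ← hcβ, foldCell]
  split_ifs <;> omega

lemma exists_list_pairwise_encloses_of_isAntichain {A : Set (SpRoot n)}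
    (hA : IsAntichain (· ≤ ·) A) :
    ∃ l : List (ℕ × ℕ), l.Pairwise Encloses ∧ ∀ c, c ∈ l ↔ c ∈ cell '' A := by
  let r (a b : SpRoot n) : Bool := a.cell.1 ≤ b.cell.1
  let L := (Set.toFinite A).toFinset.toList
  have hmem {β : SpRoot n} : β ∈ L.mergeSort r ↔ β ∈ A := by
    simp [L]
  have hsorted : (L.mergeSort r).Pairwise fun a b => r a b :=
    List.pairwise_mergeSort (by grind) (by grind) L
  have hnodup : (L.mergeSort r).Nodup :=
    (L.mergeSort_perm r).nodup_iff.2 (Finset.nodup_toList _)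
  refine ⟨(L.mergeSort r).map cell, List.pairwise_map.2 ?_, by simp [hmem]⟩
  refine (hsorted.and hnodup).imp_of_mem fun {a b} ha hb hab => ?_
  have hfst : a.cell.1 ≤ b.cell.1 := of_decide_eq_true hab.1
  have hnle := hA (hmem.1 ha) (hmem.1 hb) hab.2
  have hnge := hA (hmem.1 hb) (hmem.1 ha) hab.2.symm
  rw [Pi.compl_apply, Pi.compl_apply, compl_iff_not, le_iff] at hnle hnge
  exact ⟨by omega, by omega⟩

lemma exists_exchangeRoots_eq (hk : k ≤ 2 * n) {A : Set (SpRoot n)} (hA : IsAntichain (· ≤ ·) A)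
    (hAk : A ⊆ involving k) :
    ∃ J ⊆ Finset.Icc 1 (2 * n), J.card = k ∧ exchangeRoots n k J = A := by
  obtain ⟨l, hl, hlA⟩ := exists_list_pairwise_encloses_of_isAntichain hA
  have hfst : ∀ c ∈ l, c.1 ∈ Finset.Icc 1 k := by
    intro c hc
    obtain ⟨β, hβ, rfl⟩ := (hlA c).1 hc
    exact Finset.mem_Icc.2 ⟨β.one_le_cell_fst, (hAk hβ).1⟩
  have hsnd : ∀ c ∈ l, c.2 ∈ Finset.Ioc k (2 * n) := by
    intro c hc
    obtain ⟨β, hβ, rfl⟩ := (hlA c).1 hc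
    have := β.one_le_cell_fst
    have := β.cell_fst_add_cell_snd_le
    exact Finset.mem_Ioc.2 ⟨(hAk hβ).2, by omega⟩
  have hfold : l.map (foldCell n) = l := by
    refine (List.map_congr_left fun c hc => ?_).trans (List.map_id l)
    obtain ⟨β, -, rfl⟩ := (hlA c).1 hc
    exact foldCell_of_le β.cell_fst_add_cell_snd_le
  obtain ⟨J, hJ, hcard, hpairs⟩ := exists_exchangePairs_eq hk hl hfst hsnd
  refine ⟨J, hJ, hcard, Set.ext fun β => ?_⟩
  rw [exchangeRoots, Set.mem_ofPred_eq, hpairs, hfold, hlA, cell_injective.mem_set_image]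

theorem setOf_sKJ_eq_image_indicator (hkn : k ≤ n) :
    {s | ∃ J : Finset ℕ, J ⊆ Finset.Icc 1 (2 * n) ∧ J.card = k ∧ s = sKJ n k J} =
      (fun A : Set (SpRoot n) => A.indicator 1) ''
        {A | IsAntichain (· ≤ ·) A ∧ A ⊆ involving k} := by
  ext s
  constructor
  · rintro ⟨J, hJ, -, rfl⟩
    exact ⟨exchangeRoots n k J,
      ⟨isAntichain_exchangeRoots hJ, exchangeRoots_subset_involving hkn hJ⟩,
      (sKJ_eq_indicator_exchangeRoots hJ).symm⟩
  · rintro ⟨A, ⟨hA, hAk⟩, rfl⟩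
    obtain ⟨J, hJ, hcard, rfl⟩ := exists_exchangeRoots_eq (by omega) hA hAk
    exact ⟨J, hJ, hcard, (sKJ_eq_indicator_exchangeRoots hJ).symm⟩

end Pairings

/-- For `1 ≤ k ≤ n`, the lattice points of the fundamental symplectic FFLV
polytope satisfy `S(ω_k) = { s_{[k],J} : J ⊆ {1,…,2n}, |J| = k }`. -/
theorem spFFLV_fundamental_lattice_points (n : ℕ) (hn : 2 ≤ n)
    (k : ℕ) (hk1 : 1 ≤ k) (hkn : k ≤ n) :
    Slat n (fun t => if t = k then 1 else 0) =
      {s | ∃ J : Finset ℕ, J ⊆ Finset.Icc 1 (2*n) ∧ J.card = k ∧ s = sKJ n k J} := by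
  rw [SpRoot.Slat_fundamental_eq_image_indicator hkn, setOf_sKJ_eq_image_indicator hkn]
end

section
/- The linear map w : ℝ^{Φ⁺} → ℝ^{𝒫} defined by w(d)_J := −Σ_{β∈Φ⁺} s_{[|J|],J}(β)·d(β) is injective. -/
/-- `𝒫`: nonempty subsets of `{1,…,2n}` of size at most `n` (indices of Plücker coordinates). -/
def PIdx (n : ℕ) : Type :=
  {J : Finset ℕ // J.Nonempty ∧ J ⊆ Finset.Icc 1 (2*n) ∧ J.card ≤ n}

/-- The weight map `w : ℝ^{Φ⁺} → ℝ^{𝒫}`, `w(d)_J = -Σ_{β ∈ Φ⁺} s_{[|J|],J}(β)·d(β)`. -/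
noncomputable def wMap (n : ℕ) (d : SpRoot n → ℝ) : PIdx n → ℝ :=
  fun J => - ∑ᶠ β : SpRoot n, (sKJ n J.val.card J.val β : ℝ) * d β

/-!
Replacing a single `p ∈ {1, …, k}` by some `q > k` gives a `k`-element set `J` whose multi-exponent
`s_{[k],J}` is the indicator vector of the one root `r(p,q)`, so that `w(d)_J = -d(r(p,q))`. Every
positive root is `r(x,y)` for some `x ≤ n` and `x < y ≤ 2n`, and with `k = p = x` and `q = y` the
coordinate of `d` at this root is read off from `w(d)`.
-/

section Exchange

variable {α : Type*} [DecidableEq α] {s : Finset α} {a b : α}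

theorem sdiff_insert_erase (ha : a ∈ s) (hb : b ∉ s) : s \ insert b (s.erase a) = {a} := by
  rw [Finset.sdiff_insert_of_notMem hb, Finset.sdiff_erase_self ha]

theorem insert_erase_sdiff (hb : b ∉ s) : insert b (s.erase a) \ s = {b} := by
  rw [Finset.insert_sdiff_of_notMem _ hb, Finset.sdiff_eq_empty_iff_subset.mpr (s.erase_subset a),
    insert_empty_eq]

theorem card_insert_erase (ha : a ∈ s) (hb : b ∉ s) : (insert b (s.erase a)).card = s.card := by
  rw [Finset.card_insert_of_notMem fun h => hb (Finset.mem_of_mem_erase h),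
    Finset.card_erase_add_one ha]

theorem notMem_Icc_of_mem_Ioc {ι : Type*} [Preorder ι] [LocallyFiniteOrder ι] {a k q m : ι}
    (hq : q ∈ Finset.Ioc k m) : q ∉ Finset.Icc a k := fun h =>
  (Finset.mem_Ioc.mp hq).1.not_ge (Finset.mem_Icc.mp h).2

end Exchange

section Roots

variable {n x y j : ℕ}

theorem rIdxXY_of_le (hy : y ≤ n) : rIdxXY n x y = (x, y - 1, false) :=
  if_pos hy

theorem rIdxXY_bar (hxj : x ≤ j) (hj : j ≤ n) :
    rIdxXY n x (2 * n + 1 - j) = rIdx n x j true := by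
  rw [rIdxXY, if_neg (by omega), if_pos (by omega), if_pos (by omega),
    show 2 * n + 1 - (2 * n + 1 - j) = j by omega]

theorem exists_rIdxXY_eq (β : SpRoot n) :
    ∃ x ∈ Finset.Icc 1 n, ∃ y ∈ Finset.Ioc x (2 * n), rIdxXY n x y = β.val := by
  obtain ⟨⟨i, j, barred⟩, hi, hij, hjn, hbar⟩ := β
  dsimp only at hi hij hjn hbar ⊢
  have hin : i ∈ Finset.Icc 1 n := Finset.mem_Icc.mpr ⟨hi, hij.trans hjn⟩
  have hbar_mem : 2 * n + 1 - j ∈ Finset.Ioc i (2 * n) := Finset.mem_Ioc.mpr (by omega)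
  cases barred with
  | true =>
    have hj : j ≠ n := Nat.ne_of_lt (hbar rfl)
    exact ⟨i, hin, 2 * n + 1 - j, hbar_mem, by simp [rIdxXY_bar hij hjn, rIdx, hj]⟩
  | false =>
    obtain rfl | hj := hjn.eq_or_lt
    · exact ⟨i, hin, 2 * j + 1 - j, hbar_mem, by simp [rIdxXY_bar hij le_rfl, rIdx]⟩
    · exact ⟨i, hin, j + 1, Finset.mem_Ioc.mpr (by omega), rIdxXY_of_le hj⟩

end Roots

section Coordinates

variable {n k p q : ℕ}

theorem sKJ_insert_erase [DecidableEq (SpRoot n)] (hp : p ∈ Finset.Icc 1 k)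
    (hq : q ∉ Finset.Icc 1 k) {β : SpRoot n} (hβ : rIdxXY n p q = β.val) :
    sKJ n k (insert q ((Finset.Icc 1 k).erase p)) = Pi.single β 1 := by
  funext γ
  have hγ : β.val = γ.val ↔ γ = β := Subtype.ext_iff.symm.trans eq_comm
  simp [sKJ, sdiff_insert_erase hp hq, insert_erase_sdiff hq, hβ, hγ, List.countP_cons,
    Pi.single_apply]

theorem card_insert_erase_Icc_one (hp : p ∈ Finset.Icc 1 k) (hq : q ∉ Finset.Icc 1 k) :
    (insert q ((Finset.Icc 1 k).erase p)).card = k := by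
  rw [card_insert_erase hp hq, Nat.card_Icc, Nat.add_sub_cancel]

/-- The set `([k] ∖ {p}) ∪ {q}` with `p ≤ k < q`, as an element of `𝒫`: its coordinate of the weight
map involves only the root `r(p,q)`. -/
def PIdx.exchange (hk : k ≤ n) (hp : p ∈ Finset.Icc 1 k) (hq : q ∈ Finset.Ioc k (2 * n)) :
    PIdx n :=
  ⟨insert q ((Finset.Icc 1 k).erase p), Finset.insert_nonempty _ _, by
    refine ⟨?_, (card_insert_erase_Icc_one hp (notMem_Icc_of_mem_Ioc hq)).trans_le hk⟩
    rw [Finset.mem_Ioc] at hq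
    exact Finset.insert_subset (Finset.mem_Icc.mpr (by omega))
      ((Finset.erase_subset _ _).trans (Finset.Icc_subset_Icc_right (by omega)))⟩

theorem wMap_exchange (d : SpRoot n → ℝ) (hk : k ≤ n) (hp : p ∈ Finset.Icc 1 k)
    (hq : q ∈ Finset.Ioc k (2 * n)) {β : SpRoot n} (hβ : rIdxXY n p q = β.val) :
    wMap n d (PIdx.exchange hk hp hq) = -d β := by
  classical
  have hq_notMem : q ∉ Finset.Icc 1 k := notMem_Icc_of_mem_Ioc hq
  simp only [wMap, PIdx.exchange, card_insert_erase_Icc_one hp hq_notMem,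
    sKJ_insert_erase hp hq_notMem hβ]
  rw [finsum_eq_single _ β fun γ hγ => by simp [hγ]]
  simp

end Coordinates

/-- The linear map `w : ℝ^{Φ⁺} → ℝ^{𝒫}`,
`w(d)_J = -Σ_{β ∈ Φ⁺} s_{[|J|],J}(β)·d(β)`, is injective. -/
theorem spFFLV_weight_map_injective (n : ℕ) (hn : 2 ≤ n) :
    Function.Injective (wMap n) := by
  intro d e hde
  funext β
  obtain ⟨x, hx, y, hy, hβ⟩ := exists_rIdxXY_eq β
  obtain ⟨hx1, hxn⟩ := Finset.mem_Icc.mp hx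
  have hxx : x ∈ Finset.Icc 1 x := Finset.mem_Icc.mpr ⟨hx1, le_rfl⟩
  have hcoord := congrFun hde (PIdx.exchange hxn hxx hy)
  rwa [wMap_exchange d hxn hxx hy hβ, wMap_exchange e hxn hxx hy hβ, neg_inj] at hcoord
end
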